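/- Let w be a smooth function on ℝ^{n+1}, homogeneous of degree μ, satisfying div(y^b ∇w) = 0 in {y > 0} and symmetric in y (w(x,y) = w(x,−y)). If the trace w(·, 0) vanishes identically on ℝⁿ and w is a polynomial, then w ≡ 0 on ℝ^{n+1}. -/

import Mathlib

open MeasureTheory Real Set

noncomputable section

abbrev Eu (n : ℕ) := EuclideanSpace ℝ (Fin (n + 1))

def yc {n : ℕ} (X : Eu n) : ℝ := X (Fin.last n)

def wgt {n : ℕ} (b : ℝ) (X : Eu n) : ℝ := yc X ^ b

/-- Divergence of a vector field. -/
def dvg {n : ℕ} (V : Eu n → Eu n) (X : Eu n) : ℝ :=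
  ∑ i : Fin (n + 1), fderiv ℝ V X (EuclideanSpace.single i 1) i

/-- Reflection across the hyperplane {y = 0}. -/
def reflectY {n : ℕ} (X : Eu n) : Eu n :=
  X - (2 * yc X) • EuclideanSpace.single (Fin.last n) 1

lemma coeff_scale {σ : Type*} [Fintype σ] (s : σ → ℝ) (P : MvPolynomial σ ℝ) (m : σ →₀ ℕ) :
    MvPolynomial.coeff m (MvPolynomial.bind₁ (fun i => MvPolynomial.C (s i) * MvPolynomial.X i) P)
      = (∏ i, s i ^ m i) * MvPolynomial.coeff m P := by
  classical
  induction P using MvPolynomial.induction_on' with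
  | monomial u a =>
    have : MvPolynomial.bind₁ (fun i => MvPolynomial.C (s i) * MvPolynomial.X i)
        (MvPolynomial.monomial u a) = MvPolynomial.monomial u ((∏ i, s i ^ u i) * a) := by
      rw [MvPolynomial.bind₁_monomial, MvPolynomial.monomial_eq, map_mul, map_prod,
        Finsupp.prod_fintype _ _ (by simp)]
      rw [Finset.prod_subset (Finset.subset_univ u.support)
        (fun x _ hx => by simp [Finsupp.notMem_support_iff.mp hx])]
      simp only [mul_pow, Finset.prod_mul_distrib, map_pow]
      ring
    rw [this, MvPolynomial.coeff_monomial, MvPolynomial.coeff_monomial]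
    split_ifs with h
    · rw [h]
    · simp
  | add p q hp hq => rw [map_add, MvPolynomial.coeff_add, hp, hq, MvPolynomial.coeff_add, mul_add]

lemma eval_scale {σ : Type*} (s x : σ → ℝ) (P : MvPolynomial σ ℝ) :
    MvPolynomial.eval x (MvPolynomial.bind₁ (fun i => MvPolynomial.C (s i) * MvPolynomial.X i) P)
      = MvPolynomial.eval (fun i => s i * x i) P := by
  induction P using MvPolynomial.induction_on with
  | C a => simp
  | add p q hp hq => simp only [map_add, hp, hq]
  | mul_X p i hp => simp only [map_mul, hp]; simp

lemma algebra_part {n : ℕ} (b : ℝ) (hb : -1 < b) (P : MvPolynomial (Fin (n + 1)) ℝ)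
    (h0 : ∀ m : Fin (n + 1) →₀ ℕ, m (Fin.last n) = 0 → MvPolynomial.coeff m P = 0)
    (h1 : ∀ m : Fin (n + 1) →₀ ℕ, m (Fin.last n) = 1 → MvPolynomial.coeff m P = 0)
    (hQ : MvPolynomial.X (Fin.last n) * (∑ i, MvPolynomial.pderiv i (MvPolynomial.pderiv i P))
      + MvPolynomial.C b * MvPolynomial.pderiv (Fin.last n) P = 0) : P = 0 := by
  classical
  have key : ∀ k : ℕ, ∀ m : Fin (n + 1) →₀ ℕ, m (Fin.last n) = k →
      MvPolynomial.coeff m P = 0 := by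
    intro k
    induction k using Nat.strong_induction_on with
    | _ k ih =>
      intro m hm
      match k, ih, hm with
      | 0, _, hm => exact h0 m hm
      | 1, _, hm => exact h1 m hm
      | k + 2, ih, hm =>
        obtain ⟨m', rfl⟩ : ∃ m', m = m' + Finsupp.single (Fin.last n) 2 :=
          ⟨m - Finsupp.single (Fin.last n) 2, by
            rw [tsub_add_cancel_of_le]
            rw [Finsupp.single_le_iff]; omega⟩
        have hm' : m' (Fin.last n) = k := by simpa using hm
        have hc := congrArg (MvPolynomial.coeff (Finsupp.single (Fin.last n) 1 + m')) hQ
        rw [MvPolynomial.coeff_add, MvPolynomial.coeff_X_mul, MvPolynomial.coeff_sum,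
          MvPolynomial.coeff_C_mul, MvPolynomial.coeff_pderiv, Fin.sum_univ_castSucc,
          Finset.sum_eq_zero] at hc
        · have e1 : Finsupp.single (Fin.last n) 1 + m' + Finsupp.single (Fin.last n) 1
              = m' + Finsupp.single (Fin.last n) 2 := by
            rw [show (2 : ℕ) = 1 + 1 from rfl, Finsupp.single_add]; abel
          have e2 : m' + Finsupp.single (Fin.last n) 1 + Finsupp.single (Fin.last n) 1
              = m' + Finsupp.single (Fin.last n) 2 := by
            rw [show (2 : ℕ) = 1 + 1 from rfl, Finsupp.single_add]; abel
          rw [MvPolynomial.coeff_pderiv, MvPolynomial.coeff_pderiv, e1, e2] at hc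
          simp only [Finsupp.add_apply, Finsupp.single_eq_same, hm', MvPolynomial.coeff_zero] at hc
          push_cast at hc
          have hk : (0 : ℝ) ≤ k := Nat.cast_nonneg k
          have hp : ((k : ℝ) + 2) * (k + 1 + b) ≠ 0 := by
            have : (0 : ℝ) < k + 1 + b := by linarith
            positivity
          have : MvPolynomial.coeff (m' + Finsupp.single (Fin.last n) 2) P
              * (((k : ℝ) + 2) * (k + 1 + b)) = 0 := by linear_combination hc
          exact (mul_eq_zero.mp this).resolve_right hp
        · intro i _
          rw [MvPolynomial.coeff_pderiv, MvPolynomial.coeff_pderiv, ih k (by omega), zero_mul,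
            zero_mul]
          simp [hm', (Fin.castSucc_lt_last i).ne]
  ext m
  rw [key _ m rfl, MvPolynomial.coeff_zero]

lemma diff_eval {n : ℕ} (P : MvPolynomial (Fin (n + 1)) ℝ) (X : Eu n) :
    DifferentiableAt ℝ (fun Y : Eu n => MvPolynomial.eval (fun i => Y i) P) X ∧
    ∀ i, fderiv ℝ (fun Y : Eu n => MvPolynomial.eval (fun i => Y i) P) X
      (EuclideanSpace.single i 1) = MvPolynomial.eval (fun i => X i) (MvPolynomial.pderiv i P) := by
  have hX : ∀ j : Fin (n + 1), HasFDerivAt (fun Y : Eu n => Y j)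
      (EuclideanSpace.proj j : Eu n →L[ℝ] ℝ) X := fun j =>
    (EuclideanSpace.proj j : Eu n →L[ℝ] ℝ).hasFDerivAt
  induction P using MvPolynomial.induction_on with
  | C a => simp
  | add p q hp hq =>
    simp only [map_add]
    refine ⟨hp.1.add hq.1, fun i => ?_⟩
    rw [fderiv_fun_add hp.1 hq.1, _root_.add_apply, hp.2, hq.2]
  | mul_X p j hp =>
    simp only [map_mul, MvPolynomial.eval_X]
    refine ⟨hp.1.mul (hX j).differentiableAt, fun i => ?_⟩
    rw [fderiv_fun_mul hp.1 (hX j).differentiableAt, (hX j).fderiv]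
    simp [hp.2, MvPolynomial.pderiv_X, Pi.single_apply]
    rcases eq_or_ne i j with h | h
    · subst h; simp
    · simp [h.symm]

lemma dvg_eval {n : ℕ} (b : ℝ) (P : MvPolynomial (Fin (n + 1)) ℝ) (X : Eu n) (hX : 0 < yc X) :
    dvg (fun Y => wgt b Y • gradient (fun Y : Eu n => MvPolynomial.eval (fun i => Y i) P) Y) X
    = yc X ^ (b - 1) * MvPolynomial.eval (fun i => X i)
      (MvPolynomial.X (Fin.last n) * (∑ i, MvPolynomial.pderiv i (MvPolynomial.pderiv i P))
      + MvPolynomial.C b * MvPolynomial.pderiv (Fin.last n) P) := by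
  have hg : ∀ (Y : Eu n) (i : Fin (n + 1)),
      (gradient (fun Y : Eu n => MvPolynomial.eval (fun i => Y i) P) Y) i
      = MvPolynomial.eval (fun i => Y i) (MvPolynomial.pderiv i P) := by
    intro Y i
    rw [← (diff_eval P Y).2 i, ← inner_gradient_left]
    rw [EuclideanSpace.inner_single_right]; simp
  set V : Eu n → Eu n := fun Y =>
    wgt b Y • gradient (fun Y : Eu n => MvPolynomial.eval (fun i => Y i) P) Y with hV
  have hVi : ∀ i, (fun Y => V Y i) = fun Y : Eu n => yc Y ^ b *
      MvPolynomial.eval (fun i => Y i) (MvPolynomial.pderiv i P) := by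
    intro i
    funext Y
    simp [hV, hg, wgt]
  have hy : HasFDerivAt (fun Y : Eu n => yc Y)
      (EuclideanSpace.proj (Fin.last n) : Eu n →L[ℝ] ℝ) X :=
    (EuclideanSpace.proj (Fin.last n) : Eu n →L[ℝ] ℝ).hasFDerivAt
  have hyb : HasFDerivAt (fun Y : Eu n => yc Y ^ b)
      ((b * yc X ^ (b - 1)) • (EuclideanSpace.proj (Fin.last n) : Eu n →L[ℝ] ℝ)) X :=
    hy.rpow_const (Or.inl hX.ne')
  have hd : ∀ i, HasFDerivAt (fun Y => V Y i) _ X := fun i => by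
    rw [hVi i]
    exact hyb.mul (diff_eval (MvPolynomial.pderiv i P) X).1.hasFDerivAt
  have hVd : DifferentiableAt ℝ V X := differentiableAt_euclidean.2 fun i => (hd i).differentiableAt
  have hc : ∀ i v, fderiv ℝ V X v i = fderiv ℝ (fun Y => V Y i) X v := by
    intro i v
    have := ((EuclideanSpace.proj i : Eu n →L[ℝ] ℝ).hasFDerivAt (x := V X)).comp X hVd.hasFDerivAt
    have h2 := this.fderiv
    have h3 : fderiv ℝ (fun Y => V Y i) X = _ := h2
    rw [h3]; rfl
  have hpw : yc X ^ b = yc X ^ (b - 1) * yc X := by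
    rw [← Real.rpow_add_one hX.ne']; simp
  unfold dvg
  have hf : ∀ i, fderiv ℝ (fun Y => V Y i) X = _ := fun i => (hd i).fderiv
  simp only [hc, hf]
  simp only [_root_.add_apply, _root_.smul_apply, smul_eq_mul,
    (diff_eval _ _).2, Finset.sum_add_distrib, map_add, map_mul, map_sum, MvPolynomial.eval_X,
    MvPolynomial.eval_C, ← Finset.mul_sum, hpw]
  have hs : ∑ i : Fin (n + 1), MvPolynomial.eval (fun i => X i) (MvPolynomial.pderiv i P) *
      (b * yc X ^ (b - 1) *
        (EuclideanSpace.proj (Fin.last n) : Eu n →L[ℝ] ℝ) (EuclideanSpace.single i 1))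
      = MvPolynomial.eval (fun i => X i) (MvPolynomial.pderiv (Fin.last n) P) *
        (b * yc X ^ (b - 1)) := by
    rw [Finset.sum_eq_single (Fin.last n)]
    · simp
    · intro i _ hi
      simp [hi.symm]
    · simp
  rw [hs]
  simp only [yc]
  ring

/-- A b-harmonic, even-in-y, μ-homogeneous polynomial vanishing on the thin space {y = 0}
vanishes identically. -/
theorem stmt_14 {n : ℕ} (b : ℝ) (hb : b ∈ Set.Ioo (-1 : ℝ) 1) (μ : ℕ)
    (w : Eu n → ℝ) (hw : ContDiff ℝ (⊤ : ℕ∞) w)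
    (hhom : ∀ l : ℝ, 0 < l → ∀ X : Eu n, w (l • X) = l ^ μ * w X)
    (hharm : ∀ X : Eu n, 0 < yc X → dvg (fun Y => wgt b Y • gradient w Y) X = 0)
    (heven : ∀ X : Eu n, w (reflectY X) = w X)
    (hpoly : ∃ P : MvPolynomial (Fin (n + 1)) ℝ, ∀ X : Eu n,
      w X = MvPolynomial.eval (fun i => X i) P)
    (htrace : ∀ X : Eu n, yc X = 0 → w X = 0) :
    ∀ X : Eu n, w X = 0 := by
  classical
  obtain ⟨P, hP⟩ := hpoly
  obtain rfl : w = fun X : Eu n => MvPolynomial.eval (fun i => X i) P := funext hP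
  have hQ : MvPolynomial.X (Fin.last n) * (∑ i, MvPolynomial.pderiv i (MvPolynomial.pderiv i P))
      + MvPolynomial.C b * MvPolynomial.pderiv (Fin.last n) P = 0 := by
    refine MvPolynomial.funext_set (fun _ => Set.Ioi (0 : ℝ)) (fun _ => Set.Ioi_infinite _) ?_
    intro x hx
    have hx' : 0 < yc (WithLp.toLp 2 x : Eu n) := hx (Fin.last n) trivial
    have := hharm (WithLp.toLp 2 x) hx'
    rw [dvg_eval b P _ hx'] at this
    rw [map_zero]
    exact (mul_eq_zero.mp this).resolve_left (Real.rpow_pos_of_pos hx' _).ne'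
  have h0 : ∀ m : Fin (n + 1) →₀ ℕ, m (Fin.last n) = 0 → MvPolynomial.coeff m P = 0 := by
    intro m hm
    have hz : MvPolynomial.bind₁ (fun i => MvPolynomial.C
        ((fun i => if i = Fin.last n then (0 : ℝ) else 1) i) * MvPolynomial.X i) P = 0 := by
      apply MvPolynomial.funext
      intro x
      rw [eval_scale, map_zero]
      exact htrace (WithLp.toLp 2 fun i => (if i = Fin.last n then (0 : ℝ) else 1) * x i)
        (by simp [yc])
    have := coeff_scale (fun i => if i = Fin.last n then (0 : ℝ) else 1) P m
    rw [hz, MvPolynomial.coeff_zero, Finset.prod_eq_one, one_mul] at this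
    · exact this.symm
    · intro i _
      by_cases hi : i = Fin.last n
      · subst hi; simp [hm]
      · simp [hi]
  have h1 : ∀ m : Fin (n + 1) →₀ ℕ, m (Fin.last n) = 1 → MvPolynomial.coeff m P = 0 := by
    intro m hm
    have hz : MvPolynomial.bind₁ (fun i => MvPolynomial.C
        ((fun i => if i = Fin.last n then (-1 : ℝ) else 1) i) * MvPolynomial.X i) P = P := by
      apply MvPolynomial.funext
      intro x
      rw [eval_scale]
      have := heven (WithLp.toLp 2 x)
      simp only at this
      rw [← this]
      congr 2
      funext i
      by_cases hi : i = Fin.last n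
      · subst hi; simp [reflectY, yc]; ring
      · simp [reflectY, yc, hi]
    have := coeff_scale (fun i => if i = Fin.last n then (-1 : ℝ) else 1) P m
    rw [hz, Finset.prod_eq_single (Fin.last n)] at this
    · simp [hm] at this
      linarith
    · intro i _ hi
      simp [hi]
    · simp
  have := algebra_part b hb.1 P h0 h1 hQ
  intro X
  simp [this]
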